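/- arXiv:2209.02657 — 2 statements merged into one kernel-verified Lean document; each statement's English description precedes it below -/
import Mathlib

section
/- Let n ≥ 1, let φ be a nonsingular elliptic quadratic form on V = F^{2n+2} with elliptic quadric Q = Q^−(2n+1,q), and let Σ be the set of all hyperplanes of PG(2n+1,q) containing exactly (q^{2n}−1)/(q−1) points of Q. Then: (1) every point of Q is contained in exactly q^n(q^n+1) hyperplanes of Σ and every point of PG(2n+1,q) not in Q is contained in exactly q^{2n} hyperplanes of Σ; (2) every subspace of codimension 2 of PG(2n+1,q) is contained in exactly 0, q−1, q, or q+1 hyperplanes of Σ. -/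
open Classical in
/-- number of vectors with given value -/
noncomputable def cntN {F V : Type} [Field F] [AddCommGroup V] [Module F V] [Fintype V]
    (φ : QuadraticForm F V) (c : F) : ℕ := (Finset.univ.filter (fun v => φ v = c)).card

open Classical in
/-- number of singular vectors perpendicular to x -/
noncomputable def cntT {F V : Type} [Field F] [AddCommGroup V] [Module F V] [Fintype V]
    (φ : QuadraticForm F V) (x : V) : ℕ :=
  (Finset.univ.filter (fun v => φ v = 0 ∧ φ.polarBilin x v = 0)).card

open Classical in
lemma card_fib {F V : Type} [Field F] [Fintype F] [AddCommGroup V] [Module F V] [Fintype V]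
    (l : V →ₗ[F] F) (hl : l ≠ 0) (a : F) :
    (Finset.univ.filter (fun v => l v = a)).card * Fintype.card F = Fintype.card V := by
  have hs : Function.Surjective l := LinearMap.surjective hl
  have h1 : ∀ b, (Finset.univ.filter (fun v => l v = b)).card
      = (Finset.univ.filter (fun v => l v = a)).card := by
    intro b
    obtain ⟨x, hx⟩ := hs (a - b)
    refine Finset.card_bij' (fun v _ => v + x) (fun v _ => v - x) ?_ ?_ ?_ ?_ <;> simp_all
  have h2 := Finset.card_eq_sum_card_fiberwise (s := (Finset.univ : Finset V))
    (t := (Finset.univ : Finset F)) (f := l) (by simp)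
  rw [Finset.sum_congr rfl (fun b _ => h1 b)] at h2
  simp only [Finset.sum_const, Finset.card_univ, smul_eq_mul] at h2
  rw [h2, mul_comm]

lemma sum_N {F V : Type} [Field F] [Fintype F] [AddCommGroup V] [Module F V] [Fintype V]
    (φ : QuadraticForm F V) : ∑ c, cntN φ c = Fintype.card V := by
  classical
  have h2 := Finset.card_eq_sum_card_fiberwise (s := (Finset.univ : Finset V))
    (t := (Finset.univ : Finset F)) (f := φ) (by simp)
  rw [Finset.card_univ] at h2
  rw [h2]
  refine Finset.sum_congr rfl fun c _ => ?_
  unfold cntN; congr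

lemma polar_ne {F V : Type} [Field F] [AddCommGroup V] [Module F V]
    (φ : QuadraticForm F V) (hns : ∀ x, (∀ y, φ.polarBilin x y = 0) → x = 0) (x : V) (hx : x ≠ 0) :
    φ.polarBilin x ≠ 0 := by
  intro h
  exact hx (hns x (fun y => by rw [h]; rfl))

lemma map_add' {F V : Type} [Field F] [AddCommGroup V] [Module F V]
    (φ : QuadraticForm F V) (x y : V) : φ (x + y) = φ x + φ y + φ.polarBilin x y := by
  simp [QuadraticMap.polar]

lemma polar_comm' {F V : Type} [Field F] [AddCommGroup V] [Module F V]
    (φ : QuadraticForm F V) (x y : V) : φ.polarBilin x y = φ.polarBilin y x := by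
  simp [QuadraticMap.polar_comm]

lemma sum_N_sq {F V : Type} [Field F] [Fintype F] [AddCommGroup V] [Module F V] [Fintype V]
    (φ : QuadraticForm F V) (hns : ∀ x, (∀ y, φ.polarBilin x y = 0) → x = 0)
    (h : ℕ) (hh : h * Fintype.card F = Fintype.card V) :
    ∑ c, (cntN φ c)^2 = Fintype.card V + (Fintype.card V - 1) * h := by
  classical
  have hq : 0 < Fintype.card F := Fintype.card_pos
  have e1 : ∑ c, (cntN φ c)^2 = ∑ y : V, cntN φ (φ y) := by
    rw [← Finset.sum_fiberwise_of_maps_to (s := (Finset.univ : Finset V))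
      (t := (Finset.univ : Finset F)) (g := φ) (by simp)]
    refine Finset.sum_congr rfl fun c _ => ?_
    rw [Finset.sum_congr rfl (g := fun _ => cntN φ c)]
    · simp only [Finset.sum_const, smul_eq_mul, sq]
      congr 1
    · intro x hx; rw [(Finset.mem_filter.1 hx).2]
  have e2 : ∀ y, cntN φ (φ y) = ∑ a : V, if φ (y + a) = φ y then 1 else 0 := by
    intro y
    rw [← Finset.card_filter]
    unfold cntN
    refine Finset.card_bij' (fun v _ => v - y) (fun v _ => y + v) ?_ ?_ ?_ ?_ <;> simp
  rw [e1, Finset.sum_congr rfl (fun y _ => e2 y), Finset.sum_comm,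
    ← Finset.add_sum_erase _ _ (Finset.mem_univ (0:V))]
  congr 1
  · simp
  · rw [Finset.sum_congr rfl (g := fun _ => h)]
    · simp
    · intro a ha
      rw [← Finset.card_filter]
      have := card_fib (φ.polarBilin a) (polar_ne φ hns a (by simpa using ha)) (- φ a)
      rw [← hh] at this
      rw [← Nat.eq_of_mul_eq_mul_right hq this]
      congr 1
      ext y
      simp only [Finset.mem_filter, Finset.mem_univ, true_and]
      rw [map_add', polar_comm' φ a y]
      constructor <;> intro h <;> linear_combination h

lemma var_N {F V : Type} [Field F] [Fintype F] [AddCommGroup V] [Module F V] [Fintype V]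
    (φ : QuadraticForm F V) (hns : ∀ x, (∀ y, φ.polarBilin x y = 0) → x = 0)
    (h : ℕ) (hh : h * Fintype.card F = Fintype.card V) (s : ℤ) :
    ∑ c, ((cntN φ c : ℤ) - h - s)^2 = Fintype.card V - h + Fintype.card F * s^2 := by
  have h1 := sum_N φ
  have h2 := sum_N_sq φ hns h hh
  have hV : 1 ≤ Fintype.card V := Fintype.card_pos
  zify [hV] at h1 h2 hh
  have : ∀ c, ((cntN φ c : ℤ) - h - s)^2 = (cntN φ c : ℤ)^2 - 2 * (h+s) * cntN φ c + (h+s)^2 := by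
    intro c; ring
  rw [Finset.sum_congr rfl (fun c _ => this c), Finset.sum_add_distrib, Finset.sum_sub_distrib,
    ← Finset.mul_sum, h1, h2]
  simp only [Finset.sum_const, Finset.card_univ, nsmul_eq_mul]
  rw [← hh]; ring

lemma T_rel {F V : Type} [Field F] [Fintype F] [AddCommGroup V] [Module F V] [Fintype V]
    (φ : QuadraticForm F V) (hns : ∀ x, (∀ y, φ.polarBilin x y = 0) → x = 0)
    (h : ℕ) (hh : h * Fintype.card F = Fintype.card V) (x : V) (hx : x ≠ 0) :
    (Fintype.card F - 1) * cntN φ (φ x) + h + cntN φ 0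
      = Fintype.card V + Fintype.card F * cntT φ x := by
  classical
  have hq : 0 < Fintype.card F := Fintype.card_pos
  have e1 : ∑ t : F, ∑ z : V, (if t * φ z + φ.polarBilin x z = 0 then 1 else 0)
      = h + (Fintype.card F - 1) * cntN φ (φ x) := by
    rw [← Finset.add_sum_erase _ _ (Finset.mem_univ (0:F))]
    congr 1
    · rw [← Finset.card_filter]
      have := card_fib (φ.polarBilin x) (polar_ne φ hns x hx) 0
      rw [← hh] at this
      rw [← Nat.eq_of_mul_eq_mul_right hq this]
      simp
    · rw [Finset.sum_congr rfl (g := fun _ => cntN φ (φ x))]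
      · simp
      · intro t ht
        have ht : t ≠ 0 := by simpa using ht
        rw [← Finset.card_filter]
        unfold cntN
        refine Finset.card_bij' (fun z _ => x + t • z) (fun v _ => t⁻¹ • (v - x)) ?_ ?_ ?_ ?_
        · intro z hz
          simp only [Finset.mem_filter, Finset.mem_univ, true_and] at hz ⊢
          rw [map_add', QuadraticMap.map_smul, map_smul, smul_eq_mul, smul_eq_mul]
          linear_combination t * hz
        · intro v hv
          simp only [Finset.mem_filter, Finset.mem_univ, true_and] at hv ⊢
          have h3 := map_add' φ x (v - x)
          rw [add_sub_cancel, hv] at h3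
          rw [QuadraticMap.map_smul, map_smul, smul_eq_mul, smul_eq_mul]
          have : t * (t⁻¹ * t⁻¹ * φ (v - x)) = t⁻¹ * φ (v-x) := by field_simp
          rw [this]
          linear_combination - t⁻¹ * h3
        · intro z _; simp [smul_smul, ht]
        · intro z _; simp [smul_smul, ht]
  rw [Finset.sum_comm] at e1
  have e2 : ∀ z : V, (∑ t : F, (if t * φ z + φ.polarBilin x z = 0 then 1 else 0))
      + (if φ z = 0 then 1 else 0)
      = 1 + Fintype.card F * (if φ z = 0 ∧ φ.polarBilin x z = 0 then 1 else 0) := by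
    intro z
    by_cases hz : φ z = 0
    · by_cases hb : φ.polarBilin x z = 0
      · simp only [hz, hb]; simp; ring
      · simp only [hz, hb]; simpa using hb
    · rw [Finset.sum_eq_single (- φ.polarBilin x z / φ z)]
      · simp only [hz]; simp [hz]
      · intro b _ hb
        rw [if_neg]
        intro h; apply hb; field_simp; linear_combination h
      · simp
  have e3 := Finset.sum_congr (rfl : (Finset.univ : Finset V) = _) (fun z _ => e2 z)
  rw [Finset.sum_add_distrib, Finset.sum_add_distrib, ← Finset.mul_sum, e1, ← Finset.card_filter,
    ← Finset.card_filter] at e3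
  simp only [Finset.sum_const, Finset.card_univ, smul_eq_mul, mul_one] at e3
  unfold cntT
  unfold cntN at e3 ⊢
  rw [← e3]; ring

lemma N_elliptic {F : Type} [Field F] [Fintype F] (m : ℕ) :
    ∀ (V : Type) [AddCommGroup V] [Module F V] [Fintype V]
    (φ : QuadraticForm F V) (_ : ∀ x, (∀ y, φ.polarBilin x y = 0) → x = 0)
    (_ : Module.finrank F V = 2*m+2)
    (_ : ¬ ∃ W : Submodule F V, Module.finrank F W = m+1 ∧ ∀ v ∈ W, φ v = 0),
    cntN φ 0 + Fintype.card F ^ (m+1) = Fintype.card F ^ (2*m+1) + Fintype.card F ^ m := by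
  induction m with
  | zero =>
    intro V _ _ _ φ hns hd hell
    have : cntN φ 0 = 1 := by
      unfold cntN
      rw [Finset.card_eq_one]
      refine ⟨0, ?_⟩
      ext v
      simp only [Finset.mem_filter, Finset.mem_univ, true_and, Finset.mem_singleton]
      constructor
      · intro hv
        by_contra h0
        apply hell
        refine ⟨F ∙ v, by simpa using finrank_span_singleton h0, ?_⟩
        intro w hw
        obtain ⟨a, rfl⟩ := Submodule.mem_span_singleton.1 hw
        rw [QuadraticMap.map_smul, hv]; simp
      · rintro rfl; simp
    rw [this]; ring
  | succ m ih =>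
    intro V _ _ _ φ hns hd hell
    have hcV : Fintype.card V = Fintype.card F ^ (2*m+4) := by
      rw [Module.card_eq_pow_finrank (K := F), hd]; ring
    have hh : Fintype.card F ^ (2*m+3) * Fintype.card F = Fintype.card V := by
      rw [hcV]; ring
    have hq2 : 2 ≤ Fintype.card F := Fintype.one_lt_card
    by_cases hex : ∃ e, e ≠ 0 ∧ φ e = 0
    swap
    · exfalso
      push Not at hex
      have h1 : cntN φ 0 = 1 := by
        unfold cntN
        rw [Finset.card_eq_one]
        refine ⟨0, ?_⟩
        ext v
        simp only [Finset.mem_filter, Finset.mem_univ, true_and, Finset.mem_singleton]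
        constructor
        · intro hv
          by_contra h0
          exact hex v h0 hv
        · rintro rfl; simp
      have hv := var_N φ hns _ hh 0
      have hle : ((cntN φ 0 : ℤ) - (Fintype.card F ^ (2*m+3) : ℕ) - 0)^2
          ≤ ∑ c, ((cntN φ c : ℤ) - (Fintype.card F ^ (2*m+3) : ℕ) - 0)^2 :=
        Finset.single_le_sum (f := fun c => ((cntN φ c : ℤ) - (Fintype.card F ^ (2*m+3) : ℕ) - 0)^2)
          (fun _ _ => sq_nonneg _) (Finset.mem_univ (0:F))
      rw [hv, ← hh, h1] at hle
      have h3 : Fintype.card F ^ 3 ≤ Fintype.card F ^ (2*m+3) :=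
        Nat.pow_le_pow_right (by omega) (by omega)
      generalize Fintype.card F ^ (2*m+3) = H at *
      generalize Fintype.card F = q at *
      push_cast at hle
      zify at h3 hq2
      nlinarith [mul_nonneg (by linarith : (0:ℤ) ≤ q - 2) (sq_nonneg (q:ℤ))]
    · obtain ⟨e, he0, he⟩ := hex
      obtain ⟨f, hf⟩ : ∃ f, φ.polarBilin e f ≠ 0 := by
        by_contra hcon
        push Not at hcon
        exact he0 (hns e hcon)
      have hfe : φ.polarBilin f e ≠ 0 := by rwa [polar_comm']
      have hee : φ.polarBilin e e = 0 := by
        simp [QuadraticMap.polar_self, he]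
      set U : Submodule F V := LinearMap.ker (φ.polarBilin e) ⊓ LinearMap.ker (φ.polarBilin f) with hU
      have memU : ∀ v, v ∈ U ↔ φ.polarBilin e v = 0 ∧ φ.polarBilin f v = 0 := by
        intro v; rw [hU, Submodule.mem_inf, LinearMap.mem_ker, LinearMap.mem_ker]
      let _ : Fintype U := Fintype.ofFinite _
      have hUd : Module.finrank F U = 2*m+2 := by
        have hs : LinearMap.range ((φ.polarBilin e).prod (φ.polarBilin f)) = ⊤ := by
          rw [LinearMap.range_eq_top]
          rintro ⟨a, b⟩
          refine ⟨(a / φ.polarBilin e f) • f + ((b - (a / φ.polarBilin e f) * φ.polarBilin f f) / φ.polarBilin f e) • e, ?_⟩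
          refine Prod.ext ?_ ?_
          · change φ.polarBilin e _ = a
            simp only [map_add, map_smul, smul_eq_mul, hee]
            field_simp; ring
          · change φ.polarBilin f _ = b
            simp only [map_add, map_smul, smul_eq_mul]
            field_simp; ring
        have := LinearMap.finrank_range_add_finrank_ker ((φ.polarBilin e).prod (φ.polarBilin f))
        rw [hs, LinearMap.ker_prod, finrank_top, hd] at this
        simp only [Module.finrank_prod, Module.finrank_self] at this
        rw [hU]; omega
      let ψ : QuadraticForm F U := φ.comp U.subtype
      have hψ : ∀ u : U, ψ u = φ u := fun u => rfl
      have hψB : ∀ u w : U, ψ.polarBilin u w = φ.polarBilin (u:V) (w:V) := fun u w => rfl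
      have key := ih U ψ ?_ hUd ?_
      · have hT : cntT φ e = Fintype.card F * cntN ψ 0 := by
          classical
          unfold cntT cntN
          rw [← Finset.card_univ, ← Finset.card_product]
          symm
          refine Finset.card_bij (fun p _ => p.1 • e + (p.2 : V)) ?_ ?_ ?_
          · rintro ⟨a, u⟩ h
            simp only [Finset.mem_product, Finset.mem_filter, Finset.mem_univ, true_and] at h ⊢
            have hu := (memU u).1 u.2
            rw [hψ] at h
            rw [map_add', QuadraticMap.map_smul, he, h, map_add, map_smul, map_smul, hee]
            simp only [LinearMap.smul_apply, hu.1]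
            simp
          · rintro ⟨a, u⟩ _ ⟨b, w⟩ _ h
            simp only at h
            have hu := (memU u).1 u.2
            have hw := (memU w).1 w.2
            have h2 := congrArg (φ.polarBilin f) h
            rw [map_add, map_add, map_smul, map_smul, hu.2, hw.2, add_zero, add_zero, smul_eq_mul,
              smul_eq_mul] at h2
            have hab := mul_right_cancel₀ hfe h2
            subst hab
            have := add_left_cancel h
            rw [Subtype.ext this]
          · intro v hv
            simp only [Finset.mem_filter, Finset.mem_univ, true_and] at hv
            have hm : v - (φ.polarBilin f v / φ.polarBilin f e) • e ∈ U := by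
              rw [memU, map_sub, map_sub, map_smul, map_smul, hee, hv.2, smul_eq_mul, smul_eq_mul]
              constructor
              · simp
              · field_simp; ring
            refine ⟨(φ.polarBilin f v / φ.polarBilin f e, ⟨_, hm⟩), ?_, ?_⟩
            · simp only [Finset.mem_product, Finset.mem_filter, Finset.mem_univ, true_and]
              rw [hψ]
              simp only
              rw [sub_eq_add_neg, ← neg_smul, map_add', QuadraticMap.map_smul, he, hv.1, map_smul,
                polar_comm' φ v e, hv.2]
              simp
            · simp
        have hR := T_rel φ hns _ hh e he0
        rw [he, hT, ← hh] at hR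
        have hN : cntN φ 0 + Fintype.card F ^ (2*m+2) = Fintype.card F * cntN ψ 0 + Fintype.card F ^ (2*m+3) := by
          obtain ⟨k, hk⟩ : ∃ k, Fintype.card F = k + 1 := ⟨Fintype.card F - 1, by omega⟩
          have hp : Fintype.card F ^ (2*m+3) = Fintype.card F * Fintype.card F ^ (2*m+2) := by ring
          rw [hp] at hR ⊢
          generalize Fintype.card F ^ (2*m+2) = H at *
          rw [hk] at hR ⊢
          rw [Nat.add_sub_cancel] at hR
          apply Nat.eq_of_mul_eq_mul_left (show 0 < k + 1 by omega)
          linarith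
        have e1 : Fintype.card F ^ (m+1+1) = Fintype.card F * Fintype.card F ^ (m+1) := by ring
        have e2 : Fintype.card F ^ (2*m+2) = Fintype.card F * Fintype.card F ^ (2*m+1) := by ring
        have e3 : Fintype.card F ^ (m+1) = Fintype.card F * Fintype.card F ^ m := by ring
        have e4 : 2*(m+1)+1 = 2*m+3 := by ring
        rw [e4, e1, e3]
        rw [e2] at hN
        rw [e3] at key
        have := congrArg (fun t => Fintype.card F * t) key
        simp only [mul_add] at this
        linarith
      · intro u hu
        apply Subtype.ext
        apply hns
        intro y
        have hu' := (memU u).1 u.2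
        set b := φ.polarBilin e y / φ.polarBilin e f with hb
        set c := (φ.polarBilin f y - b * φ.polarBilin f f) / φ.polarBilin f e with hc
        have hm : y - b • f - c • e ∈ U := by
          rw [memU]
          simp only [map_sub, map_smul, smul_eq_mul, hee]
          constructor
          · rw [hb]; field_simp; ring
          · rw [hc]; field_simp; ring
        have h2 := hu ⟨_, hm⟩
        rw [hψB] at h2
        simp only [map_sub, map_smul, smul_eq_mul] at h2
        rw [polar_comm' φ u f, polar_comm' φ u e, hu'.1, hu'.2] at h2
        simpa using h2
      · rintro ⟨W, hW, hW0⟩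
        apply hell
        refine ⟨W.map U.subtype ⊔ (F ∙ e), ?_, ?_⟩
        · have hdis : Disjoint (W.map U.subtype) (F ∙ e) := by
            rw [Submodule.disjoint_span_singleton' he0]
            rintro ⟨u, _, hu⟩
            apply hfe
            have := ((memU u).1 u.2).2
            rw [← hu]; exact this
          have := Submodule.finrank_sup_add_finrank_inf_eq (W.map U.subtype) (F ∙ e)
          rw [hdis.eq_bot, finrank_bot, finrank_span_singleton he0,
            Submodule.finrank_map_subtype_eq, hW] at this
          simpa using this
        · intro v hv
          obtain ⟨w, hw, x, hx, rfl⟩ := Submodule.mem_sup.1 hv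
          obtain ⟨u, hu, rfl⟩ := hw
          obtain ⟨a, rfl⟩ := Submodule.mem_span_singleton.1 hx
          have h1 := hW0 u hu
          rw [hψ] at h1
          have h2 := ((memU u).1 u.2).1
          rw [map_add', QuadraticMap.map_smul, he, map_smul, polar_comm']
          simp only [Submodule.subtype_apply]
          rw [h1, h2]; simp

lemma N_other {F V : Type} [Field F] [Fintype F] [AddCommGroup V] [Module F V] [Fintype V]
    (φ : QuadraticForm F V) (hns : ∀ x, (∀ y, φ.polarBilin x y = 0) → x = 0) (n : ℕ)
    (hd : Module.finrank F V = 2*n+2)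
    (hN : cntN φ 0 + Fintype.card F ^ (n+1) = Fintype.card F ^ (2*n+1) + Fintype.card F ^ n)
    (c : F) (hc : c ≠ 0) :
    cntN φ c = Fintype.card F ^ (2*n+1) + Fintype.card F ^ n := by
  classical
  have hcV : Fintype.card V = Fintype.card F ^ (2*n+2) := by
    rw [Module.card_eq_pow_finrank (K := F), hd]
  have hh : Fintype.card F ^ (2*n+1) * Fintype.card F = Fintype.card V := by
    rw [hcV]; ring
  have hv := var_N φ hns _ hh (Fintype.card F ^ n : ℕ)
  rw [← Finset.add_sum_erase _ _ (Finset.mem_univ (0:F))] at hv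
  have hz : ∑ c ∈ Finset.univ.erase (0:F), ((cntN φ c : ℤ) - (Fintype.card F ^ (2*n+1) : ℕ)
      - (Fintype.card F ^ n : ℕ))^2 = 0 := by
    rw [← hh] at hv
    zify at hN
    have h0 : (cntN φ 0 : ℤ) = Fintype.card F ^ (2*n+1) + Fintype.card F ^ n
      - Fintype.card F ^ (n+1) := by linarith
    rw [h0] at hv
    have := eq_sub_of_add_eq' hv
    rw [this]
    push_cast
    ring
  rw [Finset.sum_eq_zero_iff_of_nonneg (fun _ _ => sq_nonneg _)] at hz
  have := hz c (by simpa using hc)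
  have := pow_eq_zero_iff (two_ne_zero) |>.1 this
  zify
  push_cast at this
  linarith

lemma T_vals {F V : Type} [Field F] [Fintype F] [AddCommGroup V] [Module F V] [Fintype V]
    (φ : QuadraticForm F V) (hns : ∀ x, (∀ y, φ.polarBilin x y = 0) → x = 0) (n : ℕ)
    (hd : Module.finrank F V = 2*n+2)
    (hell : ¬ ∃ W : Submodule F V, Module.finrank F W = n+1 ∧ ∀ v ∈ W, φ v = 0)
    (x : V) (hx : x ≠ 0) :
    (φ x = 0 → cntT φ x + Fintype.card F ^ (n+1) = Fintype.card F ^ (2*n) + Fintype.card F ^ n) ∧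
    (φ x ≠ 0 → cntT φ x = Fintype.card F ^ (2*n)) := by
  have hN := N_elliptic n V φ hns hd hell
  have hcV : Fintype.card V = Fintype.card F ^ (2*n+2) := by
    rw [Module.card_eq_pow_finrank (K := F), hd]
  have hh : Fintype.card F ^ (2*n+1) * Fintype.card F = Fintype.card V := by
    rw [hcV]; ring
  have hR := T_rel φ hns _ hh x hx
  have hq : 1 ≤ Fintype.card F := Fintype.card_pos
  have hq0 : (Fintype.card F : ℤ) ≠ 0 := by positivity
  rw [← hh] at hR
  constructor
  · intro h0
    rw [h0] at hR
    zify [hq] at hR hN ⊢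
    apply mul_left_cancel₀ hq0
    have h0 : (cntN φ 0 : ℤ) = Fintype.card F ^ (2*n+1) + Fintype.card F ^ n
      - Fintype.card F ^ (n+1) := by linarith
    rw [h0] at hR
    linear_combination -hR
  · intro h0
    rw [N_other φ hns n hd hN _ h0] at hR
    zify [hq] at hR hN ⊢
    apply mul_left_cancel₀ hq0
    have h0 : (cntN φ 0 : ℤ) = Fintype.card F ^ (2*n+1) + Fintype.card F ^ n
      - Fintype.card F ^ (n+1) := by linarith
    rw [h0] at hR
    linear_combination -hR

lemma img_count {F V : Type} [Field F] [Fintype F] [AddCommGroup V] [Module F V] [Fintype V]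
    (A : Set V) (f : V → Submodule F V) (hA0 : ∀ x ∈ A, x ≠ 0)
    (hf : ∀ x ∈ A, ∀ y, (y ∈ A ∧ f y = f x) ↔ ∃ u : F, u ≠ 0 ∧ y = u • x) :
    (f '' A).ncard * (Fintype.card F - 1) = A.ncard := by
  classical
  rw [Set.ncard_eq_toFinset_card' A, Set.ncard_eq_toFinset_card' (f '' A),
    Finset.card_eq_sum_card_fiberwise (s := A.toFinset) (t := (f '' A).toFinset) (f := f)
      (by intro x hx; simp only [Set.coe_toFinset] at hx ⊢; exact ⟨x, hx, rfl⟩)]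
  rw [Finset.sum_congr rfl (g := fun _ => Fintype.card F - 1)]
  · simp
  · intro π hπ
    rw [Set.mem_toFinset] at hπ
    obtain ⟨x, hx, rfl⟩ := hπ
    have : (Finset.univ.erase (0:F)).card = Fintype.card F - 1 := by simp
    rw [← this]
    symm
    refine Finset.card_bij (fun u _ => u • x) ?_ ?_ ?_
    · intro u hu
      rw [Finset.mem_filter, Set.mem_toFinset]
      exact (hf x hx _).2 ⟨u, by simpa using hu, rfl⟩
    · intro u _ v _ h
      exact smul_left_injective F (hA0 x hx) h
    · intro y hy
      rw [Finset.mem_filter, Set.mem_toFinset] at hy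
      obtain ⟨u, hu, rfl⟩ := (hf x hx _).1 hy
      exact ⟨u, by simpa using hu, rfl⟩

lemma perp_eq {F V : Type} [Field F] [AddCommGroup V] [Module F V]
    (φ : QuadraticForm F V) (hns : ∀ x, (∀ y, φ.polarBilin x y = 0) → x = 0) (x y : V)
    (hx : x ≠ 0) (hy : y ≠ 0)
    (h : LinearMap.ker (φ.polarBilin y) = LinearMap.ker (φ.polarBilin x)) :
    ∃ u : F, u ≠ 0 ∧ y = u • x := by
  obtain ⟨w, hw⟩ : ∃ w, φ.polarBilin x w ≠ 0 := by
    by_contra hcon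
    push Not at hcon
    exact hx (hns x hcon)
  have key : y = (φ.polarBilin y w / φ.polarBilin x w) • x := by
    rw [← sub_eq_zero]
    apply hns
    intro z
    have hm : z - (φ.polarBilin x z / φ.polarBilin x w) • w ∈ LinearMap.ker (φ.polarBilin x) := by
      rw [LinearMap.mem_ker, map_sub, map_smul, smul_eq_mul]
      field_simp; ring
    rw [← h, LinearMap.mem_ker, map_sub, map_smul, smul_eq_mul] at hm
    rw [map_sub, map_smul, LinearMap.sub_apply, LinearMap.smul_apply, smul_eq_mul, ← hm]
    field_simp
  refine ⟨_, ?_, key⟩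
  intro h0
  rw [h0, zero_smul] at key
  exact hy key

lemma perp_smul {F V : Type} [Field F] [AddCommGroup V] [Module F V]
    (φ : QuadraticForm F V) (x : V) (u : F) (hu : u ≠ 0) :
    LinearMap.ker (φ.polarBilin (u • x)) = LinearMap.ker (φ.polarBilin x) := by
  ext z
  rw [LinearMap.mem_ker, LinearMap.mem_ker, map_smul, LinearMap.smul_apply, smul_eq_mul]
  simp [hu]

lemma hyp_eq {F V : Type} [Field F] [AddCommGroup V] [Module F V] [FiniteDimensional F V]
    (φ : QuadraticForm F V) (hns : ∀ x, (∀ y, φ.polarBilin x y = 0) → x = 0) (d : ℕ)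
    (hd : Module.finrank F V = d + 1) (π : Submodule F V) :
    Module.finrank F π = d ↔ ∃ x, x ≠ 0 ∧ π = LinearMap.ker (φ.polarBilin x) := by
  have hk : ∀ x, x ≠ 0 → Module.finrank F (LinearMap.ker (φ.polarBilin x)) = d := by
    intro x hx
    have := Module.Dual.finrank_ker_add_one_of_ne_zero (polar_ne φ hns x hx)
    omega
  constructor
  · intro h
    obtain ⟨f, hf, hle⟩ := Submodule.exists_le_ker_of_lt_top π (by
      rw [lt_top_iff_ne_top]; rintro rfl; rw [finrank_top] at h; omega)
    have hinj : Function.Injective φ.polarBilin := by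
      rw [injective_iff_map_eq_zero]
      intro x hx
      exact hns x (fun y => by rw [hx]; rfl)
    have hsur := (LinearMap.injective_iff_surjective_of_finrank_eq_finrank
      (Subspace.dual_finrank_eq (K := F) (V := V)).symm).1 hinj
    obtain ⟨x, hx⟩ := hsur f
    have hx0 : x ≠ 0 := by rintro rfl; apply hf; rw [← hx, map_zero]
    refine ⟨x, hx0, Submodule.eq_of_le_of_finrank_eq ?_ ?_⟩
    · rw [hx]; exact hle
    · rw [h, hk x hx0]
  · rintro ⟨x, hx, rfl⟩
    exact hk x hx

lemma pts_count {F V : Type} [Field F] [Fintype F] [AddCommGroup V] [Module F V] [Fintype V]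
    (φ : QuadraticForm F V) (x : V) :
    {p : Submodule F V | Module.finrank F p = 1 ∧ p ≤ LinearMap.ker (φ.polarBilin x) ∧
      ∀ v ∈ p, φ v = 0}.ncard * (Fintype.card F - 1) + 1 = cntT φ x := by
  classical
  have h := img_count (F := F) {v : V | v ≠ 0 ∧ φ v = 0 ∧ φ.polarBilin x v = 0}
    (fun v => F ∙ v) (fun v hv => hv.1) ?_
  · have e1 : {p : Submodule F V | Module.finrank F p = 1 ∧ p ≤ LinearMap.ker (φ.polarBilin x) ∧
      ∀ v ∈ p, φ v = 0} = (fun v => F ∙ v) '' {v : V | v ≠ 0 ∧ φ v = 0 ∧ φ.polarBilin x v = 0} := by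
      ext p
      constructor
      · rintro ⟨h1, h2, h3⟩
        obtain ⟨v, hv, hvs⟩ := finrank_eq_one_iff'.1 h1
        refine ⟨v, ⟨by simpa using hv, h3 v v.2, h2 v.2⟩, ?_⟩
        apply le_antisymm
        · simp [Submodule.span_le]
        · intro w hw
          obtain ⟨c, hc⟩ := hvs ⟨w, hw⟩
          rw [Submodule.mem_span_singleton]
          exact ⟨c, congrArg Subtype.val hc⟩
      · rintro ⟨v, ⟨h1, h2, h3⟩, rfl⟩
        refine ⟨finrank_span_singleton h1, ?_, ?_⟩
        · simpa [Submodule.span_le] using h3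
        · intro w hw
          obtain ⟨a, rfl⟩ := Submodule.mem_span_singleton.1 hw
          rw [QuadraticMap.map_smul, h2]; simp
    rw [e1, h]
    unfold cntT
    rw [Set.ncard_eq_toFinset_card', ← Finset.card_erase_add_one (a := (0:V))
      (s := Finset.univ.filter (fun v => φ v = 0 ∧ φ.polarBilin x v = 0)) (by simp)]
    congr 2
    ext v; simp
  · rintro y ⟨h1, h2, h3⟩ z
    constructor
    · rintro ⟨⟨g1, g2, g3⟩, g4⟩
      have : z ∈ F ∙ y := by
        have := Submodule.mem_span_singleton_self (R := F) z
        have g5 : F ∙ z = F ∙ y := g4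
        rwa [g5] at this
      obtain ⟨u, rfl⟩ := Submodule.mem_span_singleton.1 this
      exact ⟨u, by rintro rfl; simp at g1, rfl⟩
    · rintro ⟨u, hu, rfl⟩
      refine ⟨⟨smul_ne_zero hu h1, ?_, ?_⟩, ?_⟩
      · rw [QuadraticMap.map_smul, h2]; simp
      · rw [map_smul, h3]; simp
      · exact Submodule.span_singleton_smul_eq (IsUnit.mk0 u hu) y

lemma perp_count {F V : Type} [Field F] [Fintype F] [AddCommGroup V] [Module F V] [Fintype V]
    (φ : QuadraticForm F V) (hns : ∀ x, (∀ y, φ.polarBilin x y = 0) → x = 0)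
    (S : Set (Submodule F V)) (hS : ∀ π, π ∈ S ↔ ∃ x, φ x ≠ 0 ∧ π = LinearMap.ker (φ.polarBilin x))
    (W : Submodule F V) :
    {π ∈ S | W ≤ π}.ncard * (Fintype.card F - 1)
      = {x : V | φ x ≠ 0 ∧ ∀ w ∈ W, φ.polarBilin w x = 0}.ncard := by
  have hne : ∀ x, φ x ≠ 0 → x ≠ 0 := by rintro x h rfl; simp at h
  rw [← img_count (F := F) {x : V | φ x ≠ 0 ∧ ∀ w ∈ W, φ.polarBilin w x = 0}
    (fun x => LinearMap.ker (φ.polarBilin x)) (fun x hx => hne x hx.1)]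
  · congr 2
    ext π
    constructor
    · rintro ⟨h1, h2⟩
      obtain ⟨x, hx, rfl⟩ := (hS π).1 h1
      exact ⟨x, ⟨hx, fun w hw => by rw [polar_comm']; exact h2 hw⟩, rfl⟩
    · rintro ⟨x, ⟨hx, hw⟩, rfl⟩
      exact ⟨(hS _).2 ⟨x, hx, rfl⟩, fun w h => by
        rw [LinearMap.mem_ker, polar_comm']; exact hw w h⟩
  · rintro x ⟨h1, h2⟩ y
    constructor
    · rintro ⟨⟨g1, g2⟩, g3⟩
      exact perp_eq φ hns x y (hne x h1) (hne y g1) g3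
    · rintro ⟨u, hu, rfl⟩
      refine ⟨⟨?_, ?_⟩, perp_smul φ x u hu⟩
      · rw [QuadraticMap.map_smul]; simp [hu, h1]
      · intro w hw; rw [map_smul, h2 w hw]; simp

lemma line_count {F V : Type} [Field F] [Fintype F] [AddCommGroup V] [Module F V] [Fintype V]
    (φ : QuadraticForm F V) (L : Submodule F V) (hL : Module.finrank F L = 2) :
    ∃ k ∈ ({0, Fintype.card F - 1, Fintype.card F, Fintype.card F + 1} : Set ℕ),
      {x : V | φ x ≠ 0 ∧ x ∈ L}.ncard = k * (Fintype.card F - 1) := by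
  classical
  have hq : 1 ≤ Fintype.card F := Fintype.card_pos
  have hc0 : ({0}ᶜ : Set F).ncard = Fintype.card F - 1 := by
    rw [Set.ncard_compl]; simp
  by_cases hex : ∃ e ∈ L, e ≠ 0 ∧ φ e = 0
  swap
  · push Not at hex
    refine ⟨Fintype.card F + 1, by simp, ?_⟩
    have : {x : V | φ x ≠ 0 ∧ x ∈ L} = (L : Set V) \ {0} := by
      ext x
      constructor
      · rintro ⟨h1, h2⟩
        exact ⟨h2, by rintro rfl; simp at h1⟩
      · rintro ⟨h1, h2⟩
        exact ⟨hex x h1 h2, h1⟩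
    rw [this, Set.ncard_sdiff_singleton_of_mem L.zero_mem]
    have hc : (L : Set V).ncard = Fintype.card F ^ 2 := by
      have := Module.natCard_eq_pow_finrank (K := F) (V := L)
      rw [hL, Nat.card_eq_fintype_card (α := F)] at this
      rw [← this]; rfl
    rw [hc]
    obtain ⟨k, hk⟩ : ∃ k, Fintype.card F = k + 1 := ⟨Fintype.card F - 1, by omega⟩
    rw [hk]
    simp only [Nat.add_sub_cancel]
    have : (k+1)^2 = (k+1+1)*k + 1 := by ring
    omega
  · obtain ⟨e, heL, he0, he⟩ := hex
    obtain ⟨f, hfL, hf⟩ : ∃ f ∈ L, f ∉ F ∙ e := by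
      by_contra hcon
      push Not at hcon
      have h1 : Module.finrank F L ≤ Module.finrank F (F ∙ e) := Submodule.finrank_mono hcon
      rw [hL, finrank_span_singleton he0] at h1
      omega
    have hinj : ∀ a b a' b' : F, a • e + b • f = a' • e + b' • f → a = a' ∧ b = b' := by
      intro a b a' b' h
      have h1 : (b - b') • f = (a' - a) • e := by
        rw [sub_smul, sub_smul, sub_eq_sub_iff_add_eq_add, add_comm, h, add_comm]
      have hb : b = b' := by
        by_contra hb
        apply hf
        rw [Submodule.mem_span_singleton]
        refine ⟨(b - b')⁻¹ * (a' - a), ?_⟩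
        rw [mul_smul, ← h1, smul_smul, inv_mul_cancel₀ (sub_ne_zero.2 hb), one_smul]
      subst hb
      rw [sub_self, zero_smul] at h1
      have := (smul_eq_zero.1 h1.symm).resolve_right he0
      exact ⟨(sub_eq_zero.1 this).symm, rfl⟩
    have hsur : ∀ x ∈ L, ∃ a b : F, a • e + b • f = x := by
      have hli : LinearIndependent F ![e, f] := by
        rw [LinearIndependent.pair_iff]
        intro s t h
        exact hinj s t 0 0 (by simpa using h)
      have h2 := finrank_span_eq_card hli
      rw [Fintype.card_fin] at h2
      have h3 : Submodule.span F (Set.range ![e, f]) = L := by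
        apply Submodule.eq_of_le_of_finrank_eq
        · rw [Submodule.span_le]
          rintro _ ⟨i, rfl⟩
          fin_cases i
          · exact heL
          · exact hfL
        · rw [h2, hL]
      intro x hx
      rw [← h3] at hx
      rw [Matrix.range_cons, Matrix.range_cons, Matrix.range_empty, Set.union_empty,
        Set.singleton_union] at hx
      exact Submodule.mem_span_pair.1 hx
    have hφ : ∀ a b : F, φ (a • e + b • f) = b * (a * φ.polarBilin e f + b * φ f) := by
      intro a b
      rw [map_add', QuadraticMap.map_smul, QuadraticMap.map_smul, he, map_smul, map_smul,
        LinearMap.smul_apply]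
      simp only [smul_eq_mul]
      ring
    have hin : ∀ a b : F, a • e + b • f ∈ L := fun a b =>
      L.add_mem (L.smul_mem _ heL) (L.smul_mem _ hfL)
    by_cases hβ : φ.polarBilin e f = 0
    · by_cases hδ : φ f = 0
      · refine ⟨0, by simp, ?_⟩
        rw [zero_mul, Set.ncard_eq_zero]
        ext x
        simp only [Set.mem_setOf_eq, Set.mem_empty_iff_false, iff_false]
        rintro ⟨h1, h2⟩
        obtain ⟨a, b, rfl⟩ := hsur x h2
        rw [hφ, hβ, hδ] at h1
        simp at h1
      · refine ⟨Fintype.card F, by simp, ?_⟩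
        have : {x : V | φ x ≠ 0 ∧ x ∈ L} = (fun p : F × F => p.1 • e + p.2 • f) ''
            (Set.univ ×ˢ {0}ᶜ) := by
          ext x
          constructor
          · rintro ⟨h1, h2⟩
            obtain ⟨a, b, rfl⟩ := hsur x h2
            refine ⟨(a, b), ⟨trivial, ?_⟩, rfl⟩
            rintro (rfl : b = 0)
            rw [hφ] at h1; simp at h1
          · rintro ⟨⟨a, b⟩, ⟨-, hb⟩, rfl⟩
            refine ⟨?_, hin a b⟩
            simp only [hφ, hβ]
            have hb : b ≠ 0 := hb
            simp [hb, hδ]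
        rw [this, Set.ncard_image_of_injective, Set.ncard_prod, hc0, Set.ncard_univ,
          Nat.card_eq_fintype_card]
        rintro ⟨a, b⟩ ⟨a', b'⟩ h
        obtain ⟨h1, h2⟩ := hinj _ _ _ _ h
        exact Prod.ext h1 h2
    · refine ⟨Fintype.card F - 1, by simp, ?_⟩
      have : {x : V | φ x ≠ 0 ∧ x ∈ L} =
          (fun p : F × F => ((p.1 - p.2 * φ f) / φ.polarBilin e f) • e + p.2 • f) ''
          ({0}ᶜ ×ˢ {0}ᶜ) := by
        ext x
        constructor
        · rintro ⟨h1, h2⟩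
          obtain ⟨a, b, rfl⟩ := hsur x h2
          rw [hφ] at h1
          refine ⟨(a * φ.polarBilin e f + b * φ f, b), ⟨?_, ?_⟩, ?_⟩
          · exact right_ne_zero_of_mul h1
          · exact left_ne_zero_of_mul h1
          · simp only [add_sub_cancel_right]
            rw [mul_div_cancel_right₀ _ hβ]
        · rintro ⟨⟨c, b⟩, ⟨hc, hb⟩, rfl⟩
          refine ⟨?_, hin _ b⟩
          simp only [hφ]
          rw [div_mul_cancel₀ _ hβ, sub_add_cancel]
          exact mul_ne_zero hb hc
      rw [this, Set.ncard_image_of_injective, Set.ncard_prod, hc0]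
      rintro ⟨c, b⟩ ⟨c', b'⟩ h
      obtain ⟨h1, h2⟩ := hinj _ _ _ _ h
      simp only at h1 h2
      subst h2
      rw [div_left_inj' hβ] at h1
      exact Prod.ext (by simpa using h1) rfl


/-- For `n ≥ 1` and a nonsingular elliptic quadratic form `φ` on `F^{2n+2}` with
quadric `Q`, the family `S` of parabolic hyperplanes satisfies: (1) every point of `Q` lies in
exactly `q^n(q^n+1)` members of `S` and every point off `Q` in exactly `q^{2n}`; (2) every
codimension-2 subspace lies in exactly `0`, `q-1`, `q` or `q+1` members of `S`. -/
theorem stmt_5 (n : ℕ) (hn : 1 ≤ n)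
    (F : Type) [Field F] [Fintype F] (q : ℕ) (hq : Fintype.card F = q)
    (φ : QuadraticForm F (Fin (2*n+2) → F))
    (hnonsing : ∀ x, (∀ y, φ (x + y) - φ x - φ y = 0) → x = 0)
    (helliptic : ¬ ∃ W : Submodule F (Fin (2*n+2) → F),
      Module.finrank F W = n+1 ∧ ∀ v ∈ W, φ v = 0)
    (S : Set (Submodule F (Fin (2*n+2) → F)))
    (hSdef : S = {π : Submodule F (Fin (2*n+2) → F) | Module.finrank F π = 2*n+1 ∧
      {p : Submodule F (Fin (2*n+2) → F) |
        Module.finrank F p = 1 ∧ p ≤ π ∧ ∀ v ∈ p, φ v = 0}.ncard = (q^(2*n) - 1)/(q - 1)}) :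
    (∀ p : Submodule F (Fin (2*n+2) → F), Module.finrank F p = 1 →
      ((∀ v ∈ p, φ v = 0) → {π ∈ S | p ≤ π}.ncard = q^n * (q^n + 1)) ∧
      (¬ (∀ v ∈ p, φ v = 0) → {π ∈ S | p ≤ π}.ncard = q^(2*n))) ∧
    (∀ W : Submodule F (Fin (2*n+2) → F), Module.finrank F W = 2*n →
      {π ∈ S | W ≤ π}.ncard ∈ ({0, q - 1, q, q + 1} : Set ℕ)) := by
  classical
  subst hq
  have hns : ∀ x, (∀ y, φ.polarBilin x y = 0) → x = 0 := fun x hx => hnonsing x hx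
  have hd : Module.finrank F (Fin (2*n+2) → F) = 2*n+2 := by simp
  have hq2 : 2 ≤ Fintype.card F := Fintype.one_lt_card
  obtain ⟨k, hk⟩ : ∃ k, Fintype.card F = k + 1 := ⟨Fintype.card F - 1, by omega⟩
  have hk0 : 0 < k := by omega
  have hkm : Fintype.card F - 1 = k := by omega
  have hT := T_vals φ hns n hd helliptic
  have hne : ∀ x, φ x ≠ 0 → x ≠ 0 := by rintro x h rfl; simp at h
  have hgeo : (Fintype.card F ^ (2*n) - 1) / (Fintype.card F - 1) * (Fintype.card F - 1) + 1
      = Fintype.card F ^ (2*n) := by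
    rw [Nat.div_mul_cancel]
    · exact Nat.sub_add_cancel (Nat.one_le_pow _ _ (by omega))
    · simpa using Nat.sub_dvd_pow_sub_pow (Fintype.card F) 1 (2*n)
  have hS : ∀ π, π ∈ S ↔ ∃ x, φ x ≠ 0 ∧ π = LinearMap.ker (φ.polarBilin x) := by
    intro π
    rw [hSdef, Set.mem_setOf_eq, hyp_eq φ hns (2*n+1) hd]
    constructor
    · rintro ⟨⟨x, hx, rfl⟩, h⟩
      refine ⟨x, ?_, rfl⟩
      intro h0
      have h1 := pts_count φ x
      rw [h, hgeo] at h1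
      have h2 := (hT x hx).1 h0
      rw [← h1] at h2
      have h3 : Fintype.card F ^ (n+1) = Fintype.card F ^ n := by omega
      have := Nat.pow_right_injective hq2 h3
      omega
    · rintro ⟨x, hx, rfl⟩
      refine ⟨⟨x, hne x hx, rfl⟩, ?_⟩
      have h1 := pts_count φ x
      rw [(hT x (hne x hx)).2 hx, ← hgeo] at h1
      apply Nat.eq_of_mul_eq_mul_right (show 0 < Fintype.card F - 1 by omega)
      omega
  have hpc := perp_count φ hns S hS
  have hcV : Fintype.card (Fin (2*n+2) → F) = Fintype.card F ^ (2*n+2) := by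
    rw [Module.card_eq_pow_finrank (K := F), hd]
  refine ⟨?_, ?_⟩
  · intro p hp
    obtain ⟨v, hv, hvs⟩ := finrank_eq_one_iff'.1 hp
    obtain ⟨y, hy⟩ := v
    have hy0 : y ≠ 0 := by simpa using hv
    have hpy : ∀ w ∈ p, ∃ c : F, w = c • y := by
      intro w hw
      obtain ⟨c, hc⟩ := hvs ⟨w, hw⟩
      exact ⟨c, (congrArg Subtype.val hc).symm⟩
    have hφp : (∀ v ∈ p, φ v = 0) ↔ φ y = 0 := by
      constructor
      · intro h; exact h y hy
      · intro h w hw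
        obtain ⟨c, rfl⟩ := hpy w hw
        rw [QuadraticMap.map_smul, h]; simp
    have hcnt : {π ∈ S | p ≤ π}.ncard * (Fintype.card F - 1) + cntT φ y
        = Fintype.card F ^ (2*n+1) := by
      have hfib := card_fib (φ.polarBilin y) (polar_ne φ hns y hy0) 0
      rw [hcV, pow_succ] at hfib
      have hfib := Nat.eq_of_mul_eq_mul_right (by omega) hfib
      rw [← hfib, hpc, Set.ncard_eq_toFinset_card']
      unfold cntT
      rw [← Finset.card_union_of_disjoint]
      · congr 1
        ext x
        simp only [Finset.mem_union, Set.mem_toFinset, Set.mem_setOf_eq, Finset.mem_filter,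
          Finset.mem_univ, true_and]
        constructor
        · rintro (⟨h1, h2⟩ | ⟨h1, h2⟩)
          · exact h2 y hy
          · exact h2
        · intro h
          by_cases h0 : φ x = 0
          · exact Or.inr ⟨h0, h⟩
          · refine Or.inl ⟨h0, ?_⟩
            intro w hw
            obtain ⟨c, rfl⟩ := hpy w hw
            rw [map_smul, LinearMap.smul_apply, h]; simp
      · rw [Finset.disjoint_left]
        intro x hx hx'
        simp only [Set.mem_toFinset, Set.mem_setOf_eq, Finset.mem_filter] at hx hx'
        exact hx.1 hx'.2.1
    rw [hφp]
    rw [hkm] at hcnt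
    constructor
    · intro h0
      have h1 := (hT y hy0).1 h0
      apply Nat.eq_of_mul_eq_mul_right hk0
      have e1 : Fintype.card F ^ (2*n) = Fintype.card F ^ n * Fintype.card F ^ n := by ring
      have e2 : Fintype.card F ^ (n+1) = Fintype.card F ^ n * (k+1) := by rw [← hk]; ring
      have e3 : Fintype.card F ^ (2*n+1) = Fintype.card F ^ n * Fintype.card F ^ n * (k+1) := by
        rw [← hk]; ring
      rw [e1, e2] at h1
      rw [e3] at hcnt
      nlinarith
    · intro h0
      have h1 := (hT y hy0).2 h0
      apply Nat.eq_of_mul_eq_mul_right hk0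
      have e3 : Fintype.card F ^ (2*n+1) = Fintype.card F ^ (2*n) * (k+1) := by
        rw [← hk]; ring
      rw [e3, h1] at hcnt
      linarith
  · intro W hW
    have hL : Module.finrank F (LinearMap.BilinForm.orthogonal φ.polarBilin W) = 2 := by
      have h1 := LinearMap.BilinForm.finrank_add_finrank_orthogonal' (B := φ.polarBilin) W
      have h2 : LinearMap.ker φ.polarBilin = ⊥ := by
        rw [LinearMap.ker_eq_bot']
        intro x hx
        exact hns x (fun y => by rw [hx]; rfl)
      rw [h2, inf_bot_eq, finrank_bot, hd, hW] at h1
      omega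
    obtain ⟨j, hj, hj2⟩ := line_count φ _ hL
    have h1 := hpc W
    have : {x | φ x ≠ 0 ∧ ∀ w ∈ W, φ.polarBilin w x = 0}
      = {x | φ x ≠ 0 ∧ x ∈ LinearMap.BilinForm.orthogonal φ.polarBilin W} := rfl
    rw [this, hj2] at h1
    rw [Nat.eq_of_mul_eq_mul_right (by omega) h1]
    exact hj
end

section
/- Let n ≥ 1 and let Σ be a nonempty family of hyperplanes of PG(2n+1,q) satisfying property (P1^+). Then |Σ| = q^n(q^{n+1} − 1); consequently the number of black points is (q^{n+1}−1)(q^n+1)/(q−1), and every hyperplane of Σ contains exactly (q^{2n}−1)/(q−1) black points. -/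
open scoped Classical in
lemma aux_points {F V : Type} [Field F] [Fintype F] [AddCommGroup V] [Module F V] [Fintype V]
    (P : Submodule F V → Prop) :
    {p : Submodule F V | Module.finrank F p = 1 ∧ P p}.ncard * (Fintype.card F - 1) =
      (Finset.univ.filter (fun v : V => v ≠ 0 ∧ P (F ∙ v))).card := by
  have hfin : {p : Submodule F V | Module.finrank F p = 1 ∧ P p}.Finite := Set.toFinite _
  rw [Set.ncard_eq_toFinset_card _ hfin]
  rw [Finset.card_eq_sum_card_fiberwise (f := fun v : V => (F ∙ v)) (t := hfin.toFinset)]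
  · rw [Finset.sum_const_nat (m := Fintype.card F - 1)]
    intro p hp
    simp only [Set.Finite.mem_toFinset, Set.mem_setOf_eq] at hp
    have h1 : (Finset.univ.filter (fun v : V => v ∈ p)).card = Fintype.card F := by
      rw [← Fintype.card_subtype]
      have := Module.card_eq_pow_finrank (K := F) (V := p)
      rw [hp.1, pow_one] at this
      rw [← this]
    rw [← h1, ← Finset.card_erase_of_mem (a := (0 : V)) (by simp)]
    congr 1
    ext v
    simp only [Finset.mem_filter, Finset.mem_univ, true_and, Finset.mem_erase]
    constructor
    · rintro ⟨⟨h0, _⟩, h⟩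
      exact ⟨h0, h ▸ Submodule.mem_span_singleton_self v⟩
    · rintro ⟨h0, h⟩
      have : (F ∙ v) = p := by
        apply Submodule.eq_of_le_of_finrank_eq
        · simpa [Submodule.span_singleton_le_iff_mem] using h
        · rw [hp.1, finrank_span_singleton h0]
      exact ⟨⟨h0, this ▸ hp.2⟩, this⟩
  · intro v hv
    simp only [Finset.coe_filter, Finset.mem_univ, true_and, Set.mem_setOf_eq] at hv
    simpa using ⟨finrank_span_singleton hv.1, hv.2⟩

open scoped Classical in
lemma aux_card {F V : Type} [Field F] [Fintype F] [AddCommGroup V] [Module F V] [Fintype V]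
    (W : Submodule F V) (d : ℕ) (h : Module.finrank F W = d) :
    (Finset.univ.filter (fun v : V => v ∈ W)).card = Fintype.card F ^ d := by
  rw [← Fintype.card_subtype, ← h, ← Module.card_eq_pow_finrank (K := F) (V := W)]

open scoped Classical in
lemma aux_swap {F V : Type} [Field F] [Fintype F] [AddCommGroup V] [Module F V] [Fintype V]
    (T : Finset (Submodule F V)) (W : Submodule F V) :
    ∑ v ∈ Finset.univ.filter (fun v : V => v ∈ W), (((T.filter (fun σ => v ∈ σ)).card : ℕ) : ℤ) =
      ∑ σ ∈ T, (((Finset.univ.filter (fun v : V => v ∈ W ⊓ σ)).card : ℕ) : ℤ) := by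
  simp only [Finset.card_filter, Nat.cast_sum, Nat.cast_ite, Nat.cast_one, Nat.cast_zero]
  rw [Finset.sum_comm]
  refine Finset.sum_congr rfl fun σ _ => ?_
  rw [Finset.sum_filter]
  refine Finset.sum_congr rfl fun v _ => ?_
  by_cases h1 : v ∈ W <;> by_cases h2 : v ∈ σ <;> simp [h1, h2]

lemma aux_inf {F V : Type} [Field F] [AddCommGroup V] [Module F V] [FiniteDimensional F V]
    (m : ℕ) (hV : Module.finrank F V = m + 2) (A B : Submodule F V)
    (hA : Module.finrank F A = m + 1) (hB : Module.finrank F B = m + 1) (hne : A ≠ B) :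
    Module.finrank F (A ⊓ B : Submodule F V) = m := by
  have h1 := Submodule.finrank_sup_add_finrank_inf_eq A B
  have h2 : Module.finrank F (A ⊔ B : Submodule F V) ≤ m + 2 := hV ▸ Submodule.finrank_le _
  have h3 : m + 1 < Module.finrank F (A ⊔ B : Submodule F V) := by
    rw [← hA]
    apply Submodule.finrank_lt_finrank_of_lt
    refine lt_of_le_of_ne le_sup_left fun h => hne ?_
    have : B ≤ A := h ▸ le_sup_right
    exact (Submodule.eq_of_le_of_finrank_eq this (by rw [hA, hB])).symm
  omega

/-- The quadratic equation for `|S|` has a single integral root. -/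
lemma aux_root (q Q k : ℤ) (hq : 2 ≤ q) (hQ : q ≤ Q)
    (h : k * (q * Q ^ 2) + k * (k - 1) * Q ^ 2 - ((Q * (Q - 1)) + Q ^ 2) * (k * (q * Q ^ 2))
      + (Q * (Q - 1)) * Q ^ 2 * (q ^ 2 * Q ^ 2) = (k - Q * (Q - 1)) * (k - Q ^ 2)) :
    k = Q * (q * Q - 1) := by
  have h1 : (k - Q * (q * Q - 1)) * ((Q - 1) * ((Q + 1) * k - Q ^ 2 * (q * Q + 1))) = 0 := by
    linear_combination h
  rcases mul_eq_zero.1 h1 with h2 | h2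
  · linarith
  rcases mul_eq_zero.1 h2 with h3 | h3
  · linarith
  exfalso
  have h4 : (Q + 1) ∣ (q - 1) := by
    refine ⟨-k + Q ^ 2 * q - (q - 1) * (Q - 1) + 0, ?_⟩
    linear_combination h3
  have := Int.le_of_dvd (by linarith) h4
  linarith

open scoped Classical in
/-- Double counting of black vectors in a subspace. -/
lemma aux_black {V : Type} [Fintype V] [Zero V] (W : V → Prop) (h0 : W 0) (f : V → ℕ) (a c Q : ℤ)
    (hac : a + Q = c) (hQ : Q ≠ 0) (k : ℤ) (hk : (f 0 : ℤ) = k)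
    (hf : ∀ v, v ≠ 0 → (f v : ℤ) = a ∨ (f v : ℤ) = c) :
    ∑ v ∈ Finset.univ.filter W, (f v : ℤ) =
      k + c * (((Finset.univ.filter W).card : ℤ) - 1) -
        Q * ((Finset.univ.filter (fun v => v ≠ 0 ∧ (f v : ℤ) = a ∧ W v)).card : ℤ) := by
  have hm : (0 : V) ∈ Finset.univ.filter W := by simpa using h0
  rw [← Finset.add_sum_erase _ _ hm, hk]
  have h1 : ∀ v ∈ (Finset.univ.filter W).erase 0, (f v : ℤ) =
      c - Q * (if (f v : ℤ) = a then 1 else 0) := by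
    intro v hv
    have hv0 := (Finset.mem_erase.1 hv).1
    by_cases h : (f v : ℤ) = a
    · simp only [h, if_true]; linarith
    · simp only [h, if_false]
      rcases hf v hv0 with h' | h'
      · exact absurd h' h
      · linarith
  rw [Finset.sum_congr rfl h1, Finset.sum_sub_distrib, Finset.sum_const, ← Finset.mul_sum,
    Finset.card_erase_of_mem hm, Finset.sum_boole, Finset.filter_erase, nsmul_eq_mul,
    Nat.cast_sub (Finset.card_pos.2 ⟨_, hm⟩)]
  have : (({v ∈ Finset.univ.filter W | (f v : ℤ) = a}).erase 0) =
      Finset.univ.filter (fun v => v ≠ 0 ∧ (f v : ℤ) = a ∧ W v) := by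
    ext v; simp; tauto
  rw [this]
  push_cast
  ring

/-- For `n ≥ 1` and a nonempty family `S` of hyperplanes of `PG(2n+1,q)`
satisfying (P1⁺): `|S| = q^n(q^{n+1}-1)`, the number of black points is
`(q^{n+1}-1)(q^n+1)/(q-1)`, and every hyperplane of `S` contains exactly `(q^{2n}-1)/(q-1)`
black points. -/
theorem stmt_14 (n : ℕ) (hn : 1 ≤ n)
    (F : Type) [Field F] [Fintype F] (q : ℕ) (hq : Fintype.card F = q)
    (S : Set (Submodule F (Fin (2*n+2) → F)))
    (hS : S.Nonempty)
    (hhyp : ∀ π ∈ S, Module.finrank F π = 2*n+1)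
    (hP1 : ∀ p : Submodule F (Fin (2*n+2) → F), Module.finrank F p = 1 →
      {π ∈ S | p ≤ π}.ncard = q^n * (q^n - 1) ∨ {π ∈ S | p ≤ π}.ncard = q^(2*n)) :
    S.ncard = q^n * (q^(n+1) - 1) ∧
    {p : Submodule F (Fin (2*n+2) → F) | Module.finrank F p = 1 ∧
      {π ∈ S | p ≤ π}.ncard = q^n * (q^n - 1)}.ncard = (q^(n+1) - 1) * (q^n + 1) / (q - 1) ∧
    ∀ π ∈ S,
      {p : Submodule F (Fin (2*n+2) → F) | Module.finrank F p = 1 ∧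
        {σ ∈ S | p ≤ σ}.ncard = q^n * (q^n - 1) ∧ p ≤ π}.ncard = (q^(2*n) - 1)/(q - 1) := by
  classical
  subst hq
  set q := Fintype.card F with hqdef
  have hq2 : 2 ≤ q := Fintype.one_lt_card
  have hQq : q ≤ q ^ n := Nat.le_self_pow (by omega) q
  obtain ⟨Q, hQ⟩ : ∃ Q, Q = q ^ n := ⟨_, rfl⟩
  have e1 : q ^ (n + 1) = q * Q := by rw [hQ]; ring
  have e2 : q ^ (2 * n) = Q ^ 2 := by rw [hQ]; ring
  have e3 : q ^ (2 * n + 1) = q * Q ^ 2 := by rw [hQ]; ring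
  have e4 : q ^ (2 * n + 2) = q ^ 2 * Q ^ 2 := by rw [hQ]; ring
  rw [← hQ] at hQq
  simp only [e1, e2, ← hQ] at hP1 ⊢
  have hSfin : S.Finite := Set.toFinite _
  obtain ⟨T, rfl⟩ : ∃ T : Finset (Submodule F (Fin (2*n+2) → F)), S = ↑T :=
    ⟨hSfin.toFinset, by simp⟩
  obtain ⟨f, hf⟩ : ∃ f : (Fin (2*n+2) → F) → ℕ, f = fun v => (T.filter (fun σ => v ∈ σ)).card :=
    ⟨_, rfl⟩
  have hfn : ∀ v, {π ∈ (↑T : Set (Submodule F (Fin (2*n+2) → F))) | (F ∙ v) ≤ π}.ncard = f v := by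
    intro v
    simp only [hf]
    rw [← Set.ncard_coe_finset]
    congr 1
    ext σ
    simp [Submodule.span_singleton_le_iff_mem]
  have ha : ((Q * (Q - 1) : ℕ) : ℤ) = (Q : ℤ) * (Q - 1) := by
    rw [Nat.cast_mul, Nat.cast_sub (by omega)]; simp
  have hfv : ∀ v, v ≠ 0 → (f v : ℤ) = (Q : ℤ) * (Q - 1) ∨ (f v : ℤ) = (Q : ℤ) ^ 2 := by
    intro v hv
    have := hP1 (F ∙ v) (finrank_span_singleton hv)
    rw [hfn] at this
    rcases this with h | h
    · left; rw [h, ha]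
    · right; rw [h]; simp
  have hf0 : f 0 = T.card := by simp [hf]
  have hV : Module.finrank F (Fin (2*n+2) → F) = 2 * n + 2 := by simp
  have hcardT : ∀ σ ∈ T, (Finset.univ.filter (fun v : Fin (2*n+2) → F => v ∈ σ)).card
      = q * Q ^ 2 := by
    intro σ hσ
    rw [aux_card σ _ (hhyp σ (by simpa using hσ)), ← hqdef, e3]
  have hcardTop : (Finset.univ.filter (fun v : Fin (2*n+2) → F =>
      v ∈ (⊤ : Submodule F (Fin (2*n+2) → F)))).card = q ^ 2 * Q ^ 2 := by
    rw [aux_card ⊤ (2 * n + 2) (by rw [finrank_top, hV]), ← hqdef, e4]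
  obtain ⟨k, hk⟩ : ∃ k : ℤ, k = T.card := ⟨_, rfl⟩
  have hsumTop : ∑ v : Fin (2*n+2) → F, (f v : ℤ) = k * (q * Q ^ 2) := by
    have := aux_swap T (⊤ : Submodule F (Fin (2*n+2) → F))
    simp only [top_inf_eq] at this
    have h2 : ∑ σ ∈ T, (((Finset.univ.filter (fun v : Fin (2*n+2) → F => v ∈ σ)).card : ℕ) : ℤ)
        = ∑ σ ∈ T, ((q * Q ^ 2 : ℕ) : ℤ) :=
      Finset.sum_congr rfl (fun σ hσ => by rw [hcardT σ hσ])
    rw [h2] at this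
    simp only [Submodule.mem_top, Finset.filter_true, Finset.sum_const, nsmul_eq_mul] at this
    rw [hf, this, hk]
    push_cast
    ring
  have hsumπ : ∀ π ∈ T, ∑ v ∈ Finset.univ.filter (fun v : Fin (2*n+2) → F => v ∈ π), (f v : ℤ)
      = q * Q ^ 2 + (k - 1) * Q ^ 2 := by
    intro π hπ
    have := aux_swap T π
    have h2 : ∑ σ ∈ T.erase π,
        (((Finset.univ.filter (fun v : Fin (2*n+2) → F => v ∈ π ⊓ σ)).card : ℕ) : ℤ)
        = ∑ σ ∈ T.erase π, ((Q : ℤ) ^ 2) := by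
      refine Finset.sum_congr rfl fun σ hσ => ?_
      have hσ' := Finset.mem_erase.1 hσ
      rw [aux_card (π ⊓ σ) (2 * n) (aux_inf (2 * n) hV π σ (hhyp π (by simpa using hπ))
          (hhyp σ (by simpa using hσ'.2)) hσ'.1.symm), ← hqdef, e2]
      push_cast; rfl
    rw [← Finset.add_sum_erase _ _ hπ, inf_idem, hcardT π hπ, h2, Finset.sum_const,
      Finset.card_erase_of_mem hπ, nsmul_eq_mul,
      Nat.cast_sub (Finset.card_pos.2 ⟨_, hπ⟩), ← hk] at this
    rw [hf, this]
    push_cast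
    ring
  have hsumSq : ∑ v : Fin (2*n+2) → F, (f v : ℤ) ^ 2
      = k * (q * Q ^ 2) + k * (k - 1) * Q ^ 2 := by
    have h1 : ∀ v : Fin (2*n+2) → F, (f v : ℤ) ^ 2 =
        ∑ π ∈ T, if v ∈ π then (f v : ℤ) else 0 := by
      intro v
      rw [← Finset.sum_filter, Finset.sum_const, nsmul_eq_mul, sq, hf]
    rw [Finset.sum_congr rfl (fun v _ => h1 v), Finset.sum_comm,
      Finset.sum_congr rfl (fun π hπ => by rw [← Finset.sum_filter, hsumπ π hπ]),
      Finset.sum_const, nsmul_eq_mul, ← hk]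
    ring
  have hzero : ∑ v : Fin (2*n+2) → F, ((f v : ℤ) - Q * (Q - 1)) * ((f v : ℤ) - Q ^ 2)
      = (k - Q * (Q - 1)) * (k - Q ^ 2) := by
    rw [Finset.sum_eq_single 0]
    · rw [hf0, hk]
    · intro v _ hv
      rcases hfv v hv with h | h <;> rw [h] <;> ring
    · simp
  have hcardV : ((Finset.univ : Finset (Fin (2*n+2) → F)).card : ℤ) = q ^ 2 * Q ^ 2 := by
    have := hcardTop
    simp only [Submodule.mem_top, Finset.filter_true] at this
    rw [this]; push_cast; rfl
  have hexp : ∑ v : Fin (2*n+2) → F, ((f v : ℤ) - Q * (Q - 1)) * ((f v : ℤ) - Q ^ 2)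
      = ∑ v : Fin (2*n+2) → F, (f v : ℤ) ^ 2
        - ((Q * (Q - 1)) + Q ^ 2) * ∑ v : Fin (2*n+2) → F, (f v : ℤ)
        + (Q * (Q - 1)) * Q ^ 2 * (q ^ 2 * Q ^ 2) := by
    have h2 : ∑ v : Fin (2*n+2) → F, (((Q : ℤ) * (Q - 1)) * Q ^ 2 : ℤ)
        = ((Q : ℤ) * (Q - 1)) * Q ^ 2 * (q ^ 2 * Q ^ 2) := by
      rw [Finset.sum_const, nsmul_eq_mul, hcardV]; ring
    rw [← h2, Finset.mul_sum, ← Finset.sum_sub_distrib, ← Finset.sum_add_distrib]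
    refine Finset.sum_congr rfl fun v _ => ?_
    ring
  have hkv : k = (Q : ℤ) * (q * Q - 1) := by
    apply aux_root q Q k (by exact_mod_cast hq2) (by exact_mod_cast hQq)
    rw [← hzero, hexp, hsumSq, hsumTop]
  have hqQ : 1 ≤ q * Q := Nat.mul_pos (by omega) (by omega)
  have hQ0 : (Q : ℤ) ≠ 0 := by
    have : Q ≠ 0 := by omega
    exact_mod_cast this
  have hblk : ∀ v, ((f v : ℤ) = (Q : ℤ) * (Q - 1)) ↔ f v = Q * (Q - 1) := by
    intro v; rw [← ha]; norm_cast
  refine ⟨?_, ?_, ?_⟩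
  · rw [Set.ncard_coe_finset]
    zify [hqQ]
    rw [← hk, hkv]
  · have hb := aux_black (fun v : Fin (2*n+2) → F => v ∈ (⊤ : Submodule F (Fin (2*n+2) → F)))
      (by simp) f (Q * (Q - 1)) (Q ^ 2) Q (by ring) hQ0 k (by rw [hf0, hk]) hfv
    rw [hcardTop] at hb
    simp only [Submodule.mem_top, Finset.filter_true, and_true, hblk] at hb
    rw [hsumTop] at hb
    have hp := aux_points (F := F) (V := Fin (2*n+2) → F) (fun p =>
      {π ∈ (↑T : Set (Submodule F (Fin (2*n+2) → F))) | p ≤ π}.ncard = Q * (Q - 1))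
    simp only [hfn] at hp
    rw [← hp, hkv, ← hqdef] at hb
    apply Nat.eq_div_of_mul_eq_left (by omega)
    apply Nat.cast_injective (R := ℤ)
    apply mul_left_cancel₀ hQ0
    rw [Nat.cast_mul (_ - _), Nat.cast_sub hqQ]
    push_cast at hb ⊢
    linear_combination hb
  · intro π hπ
    have hπ' : π ∈ T := by simpa using hπ
    have hb := aux_black (fun v : Fin (2*n+2) → F => v ∈ π)
      (by simp) f (Q * (Q - 1)) (Q ^ 2) Q (by ring) hQ0 k (by rw [hf0, hk]) hfv
    rw [hcardT π hπ', hsumπ π hπ'] at hb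
    simp only [hblk] at hb
    have hp := aux_points (F := F) (V := Fin (2*n+2) → F) (fun p =>
      {π ∈ (↑T : Set (Submodule F (Fin (2*n+2) → F))) | p ≤ π}.ncard = Q * (Q - 1) ∧ p ≤ π)
    simp only [hfn] at hp
    simp only [Submodule.span_singleton_le_iff_mem] at hp
    rw [← hp, hkv, ← hqdef] at hb
    apply Nat.eq_div_of_mul_eq_left (by omega)
    apply Nat.cast_injective (R := ℤ)
    apply mul_left_cancel₀ hQ0
    rw [Nat.cast_sub (Nat.one_le_pow _ _ (by omega))]
    push_cast at hb ⊢
    linear_combination hb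
end
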